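/- Fix x ≥ 1 and let q♯(t) = F_q(t, 0, 2), which is increasing on [0, +∞) with limit +∞, so that (q♯)⁻¹(x) is well defined. Then for every t > (q♯)⁻¹(x) one has Δ(t, x) = (0, p₀(t, x)) with p₀(t, x) ∈ [√2, 2); moreover p₀(t, x) → √2 as t → +∞. -/

import Mathlib

open Real Set Filter MeasureTheory
open scoped Topology

/-- The potential `g` from the Hamiltonian `H(x,p) = p²/2 + g(x)`. -/
noncomputable def g (x : ℝ) : ℝ := if |x| ≤ 1 then 1 - (1 - x ^ 2) ^ 4 else 1

/-- The derivative of `g`. -/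
noncomputable def g' (x : ℝ) : ℝ := if |x| ≤ 1 then 8 * x * (1 - x ^ 2) ^ 3 else 0

/-- `(q, p)` is a (global) solution of the Hamiltonian system (HS): `q̇ = p`, `ṗ = -g'(q)`. -/
def IsHSSol (q p : ℝ → ℝ) : Prop :=
  (∀ t : ℝ, HasDerivAt q (p t) t) ∧ (∀ t : ℝ, HasDerivAt p (-(g' (q t))) t)

/-- `F` is the flow of (HS): `F t q₀ p₀ = (q t, p t)` for the solution with data `(q₀, p₀)`. -/
def IsHSFlow (F : ℝ → ℝ → ℝ → ℝ × ℝ) : Prop :=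
  ∀ q₀ p₀ : ℝ,
    IsHSSol (fun t => (F t q₀ p₀).1) (fun t => (F t q₀ p₀).2) ∧ F 0 q₀ p₀ = (q₀, p₀)

/-- The set `([0,∞) × {2}) ∪ ({0} × (0,2])`, codomain of the map `Δ`. -/
def Dset : Set (ℝ × ℝ) := (Ici (0:ℝ) ×ˢ ({2} : Set ℝ)) ∪ ({(0:ℝ)} ×ˢ Ioc (0:ℝ) 2)

/-- `T` is the smallest positive period of `q`. -/
def IsSmallestPeriod (q : ℝ → ℝ) (T : ℝ) : Prop :=
  0 < T ∧ Function.Periodic q T ∧ ∀ T' : ℝ, 0 < T' → Function.Periodic q T' → T ≤ T'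

/-- `T` is the period map `𝒯`, assigning to `p₀ ∈ (0, √2)` the smallest positive period of
the `q`-component of the solution of (HS) with initial datum `(0, p₀)`. -/
def IsPeriodMap (F : ℝ → ℝ → ℝ → ℝ × ℝ) (T : ℝ → ℝ) : Prop :=
  ∀ p₀ ∈ Ioo (0:ℝ) (Real.sqrt 2), IsSmallestPeriod (fun t => (F t 0 p₀).1) (T p₀)

/-- `Δ` associates to `(t,x)` the datum in `Dset` whose orbit stays positive on `(0,t)`
and reaches `x` at time `t`. -/
def IsDeltaMap (F : ℝ → ℝ → ℝ → ℝ × ℝ) (Δ : ℝ → ℝ → ℝ × ℝ) : Prop :=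
  ∀ t x : ℝ, 0 < t → 0 < x →
    Δ t x ∈ Dset ∧ (F t (Δ t x).1 (Δ t x).2).1 = x ∧
      ∀ s ∈ Ioo (0:ℝ) t, 0 < (F s (Δ t x).1 (Δ t x).2).1

/-- The solution `u` of the conservation law built from the flow `F` and the map `Δ`
(extended by `0` at `x = 0`). -/
noncomputable def usol (F : ℝ → ℝ → ℝ → ℝ × ℝ) (Δ : ℝ → ℝ → ℝ × ℝ) (t x : ℝ) : ℝ :=
  if 0 < x then (F t (Δ t x).1 (Δ t x).2).2
  else if x < 0 then -(F t (Δ t (-x)).1 (Δ t (-x)).2).2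
  else 0

lemma h_g (x : ℝ) : HasDerivAt g (g' x) x := by
  have e : g = fun x => 1 - (fun y : ℝ => if 0 ≤ y then y ^ 4 else 0) (1 - x ^ 2) := by
    funext x
    simp only [g]
    have : |x| ≤ 1 ↔ 0 ≤ 1 - x ^ 2 := by
      rw [sub_nonneg]; exact (sq_le_one_iff_abs_le_one x).symm
    simp only [this]
    split_ifs <;> simp
  have key : ∀ y : ℝ, HasDerivAt (fun y : ℝ => if 0 ≤ y then y ^ 4 else 0)
      (if 0 ≤ y then 4 * y ^ 3 else 0) y := by
    intro y
    have h4 : HasDerivAt (fun y : ℝ => y ^ 4) (4 * y ^ 3) y := by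
      simpa using hasDerivAt_pow 4 y
    rcases lt_trichotomy y 0 with h | h | h
    · rw [if_neg (not_le.2 h)]
      refine (hasDerivAt_const y (0:ℝ)).congr_of_eventuallyEq ?_
      filter_upwards [Iio_mem_nhds h] with z hz
      rw [if_neg (not_le.2 hz)]
    · subst h
      rw [← hasDerivWithinAt_univ, ← Iic_union_Ici (a := (0:ℝ))]
      refine HasDerivWithinAt.union ?_ ?_
      · have := (hasDerivAt_const (0:ℝ) (0:ℝ)).hasDerivWithinAt (s := Iic 0)
        convert this.congr (f₁ := fun y : ℝ => if 0 ≤ y then y ^ 4 else 0) ?_ ?_ using 1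
        · simp
        · intro z hz
          have hz' : z ≤ 0 := hz
          by_cases h0 : 0 ≤ z
          · have : z = 0 := le_antisymm hz' h0
            simp [this]
          · simp [h0]
        · simp
      · have := h4.hasDerivWithinAt (s := Ici 0)
        convert this.congr (f₁ := fun y : ℝ => if 0 ≤ y then y ^ 4 else 0) ?_ ?_ using 1
        · simp
        · intro z hz
          have hz' : 0 ≤ z := hz
          simp [hz']
        · simp
    · rw [if_pos h.le]
      refine h4.congr_of_eventuallyEq ?_
      filter_upwards [Ioi_mem_nhds h] with z hz
      rw [if_pos (le_of_lt hz)]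
  rw [e]
  have hin : HasDerivAt (fun x : ℝ => 1 - x ^ 2) (-(2 * x)) x := by
    simpa using (hasDerivAt_pow 2 x).const_sub 1
  have := ((key (1 - x ^ 2)).comp x hin).const_sub 1
  refine this.congr_deriv ?_
  have h1 : |x| ≤ 1 ↔ 0 ≤ 1 - x ^ 2 := by
    rw [sub_nonneg]; exact (sq_le_one_iff_abs_le_one x).symm
  simp only [g', h1]
  split_ifs <;> ring

lemma g_le (x : ℝ) : g x ≤ 1 := by
  simp only [g]; split_ifs
  · nlinarith [sq_nonneg ((1 - x ^ 2) ^ 2)]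
  · exact le_rfl

lemma g_nonneg (x : ℝ) : 0 ≤ g x := by
  simp only [g]; split_ifs with h
  · have h1 : x ^ 2 ≤ 1 := (sq_le_one_iff_abs_le_one x).2 h
    have : (1 - x ^ 2) ^ 4 ≤ 1 := pow_le_one₀ (by linarith) (by nlinarith [sq_nonneg x])
    linarith
  · exact zero_le_one

lemma g_zero : g 0 = 0 := by simp [g]

lemma g_one {x : ℝ} (h : 1 ≤ x) : g x = 1 := by
  simp only [g]; split_ifs with h1
  · have : x = 1 := le_antisymm ((abs_le.1 h1).2) h
    subst this; norm_num
  · rfl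

lemma energy {q p : ℝ → ℝ} (h : IsHSSol q p) (t : ℝ) :
    p t ^ 2 + 2 * g (q t) = p 0 ^ 2 + 2 * g (q 0) := by
  have hd : ∀ t, HasDerivAt (fun t => p t ^ 2 + 2 * g (q t)) 0 t := by
    intro t
    have := ((h.2 t).pow 2).add (((h_g (q t)).comp t (h.1 t)).const_mul 2)
    refine this.congr_deriv ?_
    push_cast; ring
  exact is_const_of_deriv_eq_zero (fun t => (hd t).differentiableAt) (fun t => (hd t).deriv) t 0

lemma speed {q p : ℝ → ℝ} (h : IsHSSol q p) (h0 : 0 < p 0) {c : ℝ} (hc : 0 < c)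
    (hcc : c ^ 2 ≤ p 0 ^ 2 + 2 * g (q 0) - 2) (t : ℝ) : c ≤ p t := by
  have hs : ∀ s, c ^ 2 ≤ p s ^ 2 := fun s => by
    have := energy h s
    have := g_le (q s)
    linarith
  by_contra! hlt
  have hneg : p t ≤ 0 := by
    by_contra! hp
    nlinarith [hs t]
  have hcont : Continuous p := continuous_iff_continuousAt.2 fun s => (h.2 s).continuousAt
  obtain ⟨s, hs0⟩ := mem_range_of_exists_le_of_exists_ge hcont ⟨t, hneg⟩ ⟨0, h0.le⟩
  have := hs s
  rw [hs0] at this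
  nlinarith

lemma dist_lb {q p : ℝ → ℝ} (h : IsHSSol q p) {c : ℝ} (hc : ∀ t, c ≤ p t) {t : ℝ}
    (ht : 0 ≤ t) : q 0 + c * t ≤ q t := by
  have hd : ∀ t, HasDerivAt (fun t => q t - c * t) (p t - c) t := fun t => by
    have := (h.1 t).sub ((hasDerivAt_id t).const_mul c)
    rw [mul_one] at this
    exact this
  have hm : Monotone (fun t => q t - c * t) :=
    monotone_of_deriv_nonneg (fun t => (hd t).differentiableAt) fun t => by
      rw [(hd t).deriv]; linarith [hc t]
  have := hm ht
  simp only at this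
  linarith

lemma compare {q p Q P : ℝ → ℝ} (h : IsHSSol q p) (H : IsHSSol Q P)
    (hq : q 0 = 0) (hp : p 0 = 2) (hQ : 0 ≤ Q 0) (hP : P 0 = 2) {t : ℝ} (ht : 0 ≤ t) :
    q t ≤ Q t := by
  have hgc : Continuous g := continuous_iff_continuousAt.2 fun s => (h_g s).continuousAt
  have hpos : ∀ y, 0 < √(2 * (2 - g y)) := fun y => Real.sqrt_pos.2 (by linarith [g_le y])
  have hfc : Continuous (fun y => (√(2 * (2 - g y)))⁻¹) :=
    Continuous.inv₀ (by fun_prop) fun y => (hpos y).ne'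
  obtain ⟨G, hG⟩ : ∃ G : ℝ → ℝ, ∀ u, HasDerivAt G (√(2 * (2 - g u)))⁻¹ u :=
    ⟨fun u => ∫ y in (0:ℝ)..u, (√(2 * (2 - g y)))⁻¹,
      fun u => (hfc.integral_hasStrictDerivAt 0 u).hasDerivAt⟩
  have hGm : StrictMono G := strictMono_of_deriv_pos fun u => by
    rw [(hG u).deriv]; exact inv_pos.2 (hpos u)
  have sp : ∀ s, 0 < p s := fun s =>
    lt_of_lt_of_le one_pos (speed h (by rw [hp]; norm_num) one_pos
      (by rw [hp, hq, g_zero]; norm_num) s)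
  have sP : ∀ s, 0 < P s := fun s =>
    lt_of_lt_of_le one_pos (speed H (by rw [hP]; norm_num) one_pos
      (by rw [hP]; linarith [g_nonneg (Q 0)]) s)
  have hd : ∀ s, HasDerivAt (fun s => G (Q s) - G (q s))
      ((√(2 * (2 - g (Q s))))⁻¹ * P s - (√(2 * (2 - g (q s))))⁻¹ * p s) s := fun s =>
    ((hG (Q s)).comp s (H.1 s)).sub ((hG (q s)).comp s (h.1 s))
  have hm : Monotone (fun s => G (Q s) - G (q s)) :=
    monotone_of_deriv_nonneg (fun t => (hd t).differentiableAt) fun s => by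
      rw [(hd s).deriv]
      have e1 : √(2 * (2 - g (q s))) = p s := by
        rw [Real.sqrt_eq_iff_mul_self_eq (by linarith [g_le (q s)]) (sp s).le]
        have := energy h s
        rw [hp, hq, g_zero] at this
        nlinarith
      have e2 : √(2 * (2 - g (Q s))) ≤ P s := by
        rw [Real.sqrt_le_left (sP s).le]
        have := energy H s
        rw [hP] at this
        linarith [g_nonneg (Q 0)]
      rw [e1, inv_mul_cancel₀ (sp s).ne', sub_nonneg, ← div_eq_inv_mul, one_le_div (hpos _)]
      exact e2
  have h1 := hm ht
  simp only [hq] at h1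
  have h2 := hGm.monotone hQ
  exact hGm.le_iff_le.1 (by linarith)

/-- For `x ≥ 1`, with `q♯(t) = F_q(t,0,2)` increasing on `[0,∞)` with limit `+∞` (so that
`(q♯)⁻¹(x)` is well defined): for every `t > (q♯)⁻¹(x)`, `Δ(t,x) = (0, p₀(t,x))` with
`p₀(t,x) ∈ [√2, 2)`; moreover `p₀(t,x) → √2` as `t → +∞`. -/
theorem stmt_13 (F : ℝ → ℝ → ℝ → ℝ × ℝ) (hF : IsHSFlow F)
    (Δ : ℝ → ℝ → ℝ × ℝ) (hΔ : IsDeltaMap F Δ)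
    (x : ℝ) (hx : 1 ≤ x) :
    StrictMonoOn (fun t => (F t 0 2).1) (Ici 0) ∧
    Tendsto (fun t => (F t 0 2).1) atTop atTop ∧
    (∃ tx : ℝ, 0 ≤ tx ∧ (F tx 0 2).1 = x) ∧
    ∀ tx : ℝ, 0 ≤ tx → (F tx 0 2).1 = x →
      (∀ t : ℝ, tx < t →
        ∃ p₀ : ℝ, p₀ ∈ Ico (Real.sqrt 2) 2 ∧ Δ t x = (0, p₀)) ∧
      Tendsto (fun t => (Δ t x).2) atTop (𝓝 (Real.sqrt 2)) := by
  have s2 : 0 < √2 := by positivity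
  have ss : √2 ^ 2 = 2 := Real.sq_sqrt (by norm_num)
  have s2' : √2 < 2 := by nlinarith
  have hsol : ∀ a b, IsHSSol (fun t => (F t a b).1) (fun t => (F t a b).2) := fun a b => (hF a b).1
  have i1 : ∀ a b, (F 0 a b).1 = a := fun a b => by rw [(hF a b).2]
  have i2 : ∀ a b, (F 0 a b).2 = b := fun a b => by rw [(hF a b).2]
  have sp : ∀ t, √2 ≤ (F t 0 2).2 := fun t =>
    speed (hsol 0 2) (by simp only [i2]; norm_num) s2
      (by simp only [i1, i2, g_zero, ss]; norm_num) t
  have hSM : StrictMono (fun t => (F t 0 2).1) := strictMono_of_deriv_pos fun t => by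
    rw [((hsol 0 2).1 t).deriv]; exact lt_of_lt_of_le s2 (sp t)
  have hlim : Tendsto (fun t => (F t 0 2).1) atTop atTop := by
    refine tendsto_atTop_mono' atTop ?_ (tendsto_id.const_mul_atTop s2)
    filter_upwards [eventually_ge_atTop 0] with t ht
    have := dist_lb (hsol 0 2) sp ht
    simp only [i1] at this
    simpa using this
  have hcont : Continuous (fun t => (F t 0 2).1) :=
    continuous_iff_continuousAt.2 fun s => ((hsol 0 2).1 s).continuousAt
  refine ⟨hSM.strictMonoOn _, hlim, ?_, ?_⟩
  · obtain ⟨T, hT⟩ := (hlim.eventually_ge_atTop x).exists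
    obtain ⟨s, hs⟩ := mem_range_of_exists_le_of_exists_ge hcont
      ⟨0, by rw [i1]; linarith⟩ ⟨T, hT⟩
    refine ⟨s, ?_, hs⟩
    by_contra! hneg
    have := hSM hneg
    simp only [i1] at this hs
    linarith
  · intro tx htx hxe
    have main : ∀ t : ℝ, tx < t →
        ∃ p₀ : ℝ, p₀ ∈ Ico (Real.sqrt 2) 2 ∧ Δ t x = (0, p₀) := by
      intro t ht
      obtain ⟨hD, hxt, -⟩ := hΔ t x (by linarith) (by linarith)
      have hlt : x < (F t 0 2).1 := hxe ▸ hSM ht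
      have no2 : 0 ≤ (Δ t x).1 → (Δ t x).2 ≠ 2 := by
        intro h1 h2
        rw [h2] at hxt
        have := compare (hsol 0 2) (hsol (Δ t x).1 2) (i1 _ _) (i2 _ _)
          (by simp only [i1]; exact h1) (i2 _ _) (t := t) (by linarith)
        simp only [hxt] at this
        linarith
      rcases hD with hD | hD
      · exact absurd hD.2 (no2 hD.1)
      · have h1 : (Δ t x).1 = 0 := hD.1
        have h2 : 0 < (Δ t x).2 ∧ (Δ t x).2 ≤ 2 := hD.2
        refine ⟨(Δ t x).2, ⟨?_, lt_of_le_of_ne h2.2 (no2 h1.ge)⟩, Prod.ext h1 rfl⟩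
        have := energy (hsol (Δ t x).1 (Δ t x).2) t
        simp only [i1, i2, hxt, g_one hx] at this
        rw [h1, g_zero] at this
        rw [Real.sqrt_le_left h2.1.le]
        nlinarith [sq_nonneg (F t 0 (Δ t x).2).2]
    refine ⟨main, ?_⟩
    rw [tendsto_order]
    constructor
    · intro a ha
      filter_upwards [eventually_gt_atTop tx] with t ht
      obtain ⟨p, hp, he⟩ := main t ht
      rw [he]
      exact lt_of_lt_of_le ha hp.1
    · intro b hb
      have hc : 0 < √(b ^ 2 - 2) := Real.sqrt_pos.2 (by nlinarith)
      filter_upwards [eventually_gt_atTop tx, eventually_gt_atTop (x / √(b ^ 2 - 2))] with t ht ht2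
      obtain ⟨p, hp, he⟩ := main t ht
      obtain ⟨-, hxt, -⟩ := hΔ t x (by linarith) (by linarith)
      rw [he] at hxt ⊢
      by_contra! hbp
      simp only at hbp hxt
      have hsp := speed (hsol 0 p) (by simp only [i2]; linarith) hc (by
        rw [Real.sq_sqrt (by nlinarith)]
        simp only [i1, i2, g_zero]
        nlinarith)
      have := dist_lb (hsol 0 p) hsp (t := t) (by linarith)
      simp only [i1, hxt] at this
      rw [div_lt_iff₀ hc] at ht2
      linarith
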